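/- For every component C of G, the function ℝ ∋ β ↦ ρ(A(β)^C) is strictly positive, continuous, and log-convex: for all β, β' ∈ ℝ and all t ∈ [0,1], ρ(A(tβ + (1−t)β')^C) ≤ ρ(A(β)^C)^t · ρ(A(β')^C)^{1−t}. -/

import Mathlib

open Filter Finset

/-- The spectral radius of a real matrix, `ρ(M) = lim_n ‖Mⁿ‖^{1/n}`
(computed with the entrywise ℓ¹-norm, and as a `limsup` so that it is always defined;
it is `0` for the matrix over the empty index type). -/
noncomputable def specRad {n : Type*} [Fintype n] [DecidableEq n] (M : Matrix n n ℝ) : ℝ :=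
  Filter.limsup (fun k : ℕ => (∑ i, ∑ j, |(M ^ k) i j|) ^ ((1 : ℝ) / (k : ℝ))) Filter.atTop

/-- The spectral radius `ρ(B^S)` of the submatrix of `B` obtained by restricting to `S × S`. -/
noncomputable def specRadOn {V : Type*} [Fintype V] (B : Matrix V V ℝ) (S : Set V) : ℝ :=
  letI : Fintype S := (Set.toFinite S).fintype
  letI : DecidableEq S := Classical.decEq _
  specRad (fun i j : S => B i.1 j.1)

variable {V E : Type*}

/-- Consecutive edges of the list match up: `r(eᵢ) = s(eᵢ₊₁)`. -/
def ChainOK (src rng : E → V) (μ : List E) : Prop :=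
  List.Chain' (fun e f => rng e = src f) μ

/-- A loop: a nonempty path `μ = e₁⋯eₙ` with `s(e₁) = r(eₙ)`. -/
def IsLoop (src rng : E → V) (μ : List E) : Prop :=
  ∃ h : μ ≠ [], ChainOK src rng μ ∧ src (μ.head h) = rng (μ.getLast h)

/-- A loop lying in the vertex set `C`. -/
def LoopIn (src rng : E → V) (C : Set V) (μ : List E) : Prop :=
  IsLoop src rng μ ∧ ∀ e ∈ μ, src e ∈ C ∧ rng e ∈ C

/-- `v ⤳ w`: there is a (possibly length-0) path from `v` to `w`. -/
def GReaches (src rng : E → V) (v w : V) : Prop :=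
  v = w ∨ ∃ μ : List E, ∃ h : μ ≠ [],
    ChainOK src rng μ ∧ src (μ.head h) = v ∧ rng (μ.getLast h) = w

/-- The closure of a set of vertices: all vertices that reach it. -/
def GClosure (src rng : E → V) (C : Set V) : Set V :=
  {v | ∃ w ∈ C, GReaches src rng v w}

/-- A component: an equivalence class of `v ∼ w` (mutual reachability) containing a loop. -/
def GIsComponent (src rng : E → V) (C : Set V) : Prop :=
  (∃ v, C = {w | GReaches src rng v w ∧ GReaches src rng w v}) ∧
  ∃ μ : List E, LoopIn src rng C μ

/-- The property that the loop `μ` witnesses circularity of the component `C`: `μ` is a simple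
loop visiting every vertex of `C`, and containing every edge of the graph joining vertices
of `C`. -/
def CircularWitness (src rng : E → V) (C : Set V) (μ : List E) : Prop :=
  LoopIn src rng C μ ∧ (μ.map src).Nodup ∧
  (∀ v ∈ C, v ∈ μ.map src) ∧
  (∀ e : E, src e ∈ C → rng e ∈ C → e ∈ μ)

/-- A circular component: a component containing, up to the choice of starting vertex,
exactly one loop. -/
def IsCircular (src rng : E → V) (C : Set V) : Prop :=
  GIsComponent src rng C ∧ ∃ μ : List E, CircularWitness src rng C μ

/-- The matrix `A(β)` with entries `A(β)_{vw} = Σ_{e : v → w} e^{-β F(e)}`. -/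
noncomputable def Amat [Fintype E] [DecidableEq V] (src rng : E → V) (F : E → ℝ) (β : ℝ) :
    Matrix V V ℝ :=
  fun v w => ∑ e ∈ Finset.univ.filter (fun e => src e = v ∧ rng e = w), Real.exp (-β * F e)

/-- `F` extended to paths: `F(e₁⋯eₙ) = F(e₁) + ⋯ + F(eₙ)`. -/
def Fpath (F : E → ℝ) (μ : List E) : ℝ := (μ.map F).sum

section Helpers

variable {n : Type*} [Fintype n] [DecidableEq n]

/-- Sum of absolute values of the entries of the `k`-th power. -/
noncomputable def powNorm (M : Matrix n n ℝ) (k : ℕ) : ℝ := ∑ i, ∑ j, |(M ^ k) i j|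

lemma pow_entry_nonneg {M : Matrix n n ℝ} (hM : ∀ i j, 0 ≤ M i j) (k : ℕ) :
    ∀ i j, 0 ≤ (M ^ k) i j := by
  induction k with
  | zero => intro i j; rw [pow_zero, Matrix.one_apply]; split_ifs <;> norm_num
  | succ k ih =>
    intro i j
    rw [pow_succ', Matrix.mul_apply]
    exact Finset.sum_nonneg fun l _ => mul_nonneg (hM _ _) (ih _ _)

lemma powNorm_nonneg (M : Matrix n n ℝ) (k : ℕ) : 0 ≤ powNorm M k :=
  Finset.sum_nonneg fun _ _ => Finset.sum_nonneg fun _ _ => abs_nonneg _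

lemma powNorm_succ_le (M : Matrix n n ℝ) (k : ℕ) :
    powNorm M (k + 1) ≤ powNorm M k * (∑ i, ∑ j, |M i j|) := by
  unfold powNorm
  set K := ∑ i, ∑ j, |M i j| with hK
  have hrow : ∀ l, ∑ j, |M l j| ≤ K := fun l =>
    Finset.single_le_sum (f := fun l => ∑ j, |M l j|)
      (fun _ _ => Finset.sum_nonneg fun _ _ => abs_nonneg _) (Finset.mem_univ l)
  rw [Finset.sum_mul]
  refine Finset.sum_le_sum fun i _ => ?_
  calc ∑ j, |(M ^ (k + 1)) i j| ≤ ∑ j, ∑ l, |(M ^ k) i l| * |M l j| := by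
        refine Finset.sum_le_sum fun j _ => ?_
        rw [pow_succ, Matrix.mul_apply]
        refine (Finset.abs_sum_le_sum_abs _ _).trans (le_of_eq ?_)
        exact Finset.sum_congr rfl fun l _ => abs_mul _ _
    _ = ∑ l, |(M ^ k) i l| * ∑ j, |M l j| := by
        rw [Finset.sum_comm]
        exact Finset.sum_congr rfl fun l _ => (Finset.mul_sum _ _ _).symm
    _ ≤ ∑ l, |(M ^ k) i l| * K :=
        Finset.sum_le_sum fun l _ => mul_le_mul_of_nonneg_left (hrow l) (abs_nonneg _)
    _ = _ := (Finset.sum_mul _ _ _).symm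

lemma powNorm_le (M : Matrix n n ℝ) (k : ℕ) :
    powNorm M (k + 1) ≤ (∑ i, ∑ j, |M i j|) ^ (k + 1) := by
  induction k with
  | zero => simp [powNorm]
  | succ k ih =>
    refine (powNorm_succ_le M (k + 1)).trans ?_
    rw [pow_succ _ (k + 1)]
    exact mul_le_mul_of_nonneg_right ih
      (Finset.sum_nonneg fun _ _ => Finset.sum_nonneg fun _ _ => abs_nonneg _)

lemma root_pow {c : ℝ} (hc : 0 ≤ c) (k : ℕ) :
    (c ^ (k + 1)) ^ ((1 : ℝ) / ((k + 1 : ℕ) : ℝ)) = c := by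
  rw [one_div]
  exact Real.pow_rpow_inv_natCast hc (Nat.succ_ne_zero k)

lemma root_bddAbove (M : Matrix n n ℝ) :
    Filter.IsBoundedUnder (· ≤ ·) atTop
      (fun k : ℕ => powNorm M k ^ ((1 : ℝ) / (k : ℝ))) := by
  refine ⟨∑ i, ∑ j, |M i j|, ?_⟩
  rw [Filter.eventually_map]
  filter_upwards [Filter.eventually_ge_atTop 1] with k hk
  obtain ⟨m, rfl⟩ := Nat.exists_eq_add_of_le' hk
  have h0 : (0 : ℝ) ≤ ∑ i, ∑ j, |M i j| :=
    Finset.sum_nonneg fun _ _ => Finset.sum_nonneg fun _ _ => abs_nonneg _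
  rw [← root_pow h0 m]
  exact (Real.rpow_le_rpow (powNorm_nonneg _ _) (powNorm_le M m) (by positivity)).trans
    (by rw [root_pow h0 m])

lemma root_bddBelow (M : Matrix n n ℝ) :
    Filter.IsBoundedUnder (· ≥ ·) atTop
      (fun k : ℕ => powNorm M k ^ ((1 : ℝ) / (k : ℝ))) :=
  ⟨0, Filter.eventually_map.2 (Filter.Eventually.of_forall fun k =>
    Real.rpow_nonneg (powNorm_nonneg M k) _)⟩

lemma specRad_eq (M : Matrix n n ℝ) :
    specRad M = limsup (fun k : ℕ => powNorm M k ^ ((1 : ℝ) / (k : ℝ))) atTop := rfl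

lemma specRad_nonneg (M : Matrix n n ℝ) : 0 ≤ specRad M := by
  rw [specRad_eq]
  exact Filter.le_limsup_of_frequently_le
    (Filter.Frequently.of_forall fun k => Real.rpow_nonneg (powNorm_nonneg M k) _)
    (root_bddAbove M)

/-- Positivity from a nonempty set of indices each having a successor in the set. -/
lemma le_specRad {M : Matrix n n ℝ} (hM : ∀ i j, 0 ≤ M i j) {c : ℝ} (hc : 0 ≤ c) (L : Set n)
    (hL : L.Nonempty) (hsucc : ∀ i ∈ L, ∃ j ∈ L, c ≤ M i j) : c ≤ specRad M := by
  have hrow : ∀ k : ℕ, ∀ i ∈ L, c ^ k ≤ ∑ j, (M ^ k) i j := by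
    intro k
    induction k with
    | zero => intro i _; simp [Matrix.one_apply]
    | succ k ih =>
      intro i hi
      obtain ⟨l, hl, hcl⟩ := hsucc i hi
      have : ∑ j, (M ^ (k + 1)) i j = ∑ l, M i l * ∑ j, (M ^ k) l j := by
        simp only [pow_succ', Matrix.mul_apply, Finset.mul_sum]
        exact Finset.sum_comm
      rw [this, pow_succ']
      calc c * c ^ k ≤ M i l * ∑ j, (M ^ k) l j :=
            mul_le_mul hcl (ih l hl) (by positivity) (hM _ _)
        _ ≤ _ := Finset.single_le_sum (f := fun l => M i l * ∑ j, (M ^ k) l j)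
            (fun l _ => mul_nonneg (hM _ _)
              (Finset.sum_nonneg fun j _ => pow_entry_nonneg hM k l j)) (Finset.mem_univ l)
  obtain ⟨v, hv⟩ := hL
  rw [specRad_eq]
  refine Filter.le_limsup_of_frequently_le (Filter.Eventually.frequently ?_) (root_bddAbove M)
  filter_upwards [Filter.eventually_ge_atTop 1] with k hk
  obtain ⟨m, rfl⟩ := Nat.exists_eq_add_of_le' hk
  have h1 : c ^ (m + 1) ≤ powNorm M (m + 1) := by
    refine (hrow (m + 1) v hv).trans ?_
    refine (Finset.sum_le_sum fun j _ => le_abs_self _).trans ?_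
    exact Finset.single_le_sum (f := fun i => ∑ j, |(M ^ (m + 1)) i j|)
      (fun _ _ => Finset.sum_nonneg fun _ _ => abs_nonneg _) (Finset.mem_univ v)
  calc c = (c ^ (m + 1)) ^ ((1 : ℝ) / ((m + 1 : ℕ) : ℝ)) := (root_pow hc m).symm
    _ ≤ _ := Real.rpow_le_rpow (by positivity) h1 (by positivity)

lemma holder_sum {ι : Type*} (s : Finset ι) (a b : ι → ℝ) (ha : ∀ i ∈ s, 0 ≤ a i)
    (hb : ∀ i ∈ s, 0 ≤ b i) {t : ℝ} (h0 : 0 < t) (h1 : t < 1) :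
    ∑ i ∈ s, a i ^ t * b i ^ (1 - t) ≤ (∑ i ∈ s, a i) ^ t * (∑ i ∈ s, b i) ^ (1 - t) := by
  have h1' : 0 < 1 - t := by linarith
  have hpq : (t⁻¹).HolderConjugate ((1 - t)⁻¹) :=
    Real.holderConjugate_iff.2 ⟨(one_lt_inv₀ h0).2 h1, by simp⟩
  have h := Real.inner_le_Lp_mul_Lq_of_nonneg s hpq (f := fun i => a i ^ t)
    (g := fun i => b i ^ (1 - t)) (fun i hi => Real.rpow_nonneg (ha i hi) _)
    (fun i hi => Real.rpow_nonneg (hb i hi) _)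
  refine h.trans (le_of_eq ?_)
  simp only [one_div, inv_inv]
  congr 2
  · exact Finset.sum_congr rfl fun i hi => Real.rpow_rpow_inv (ha i hi) h0.ne'
  · exact Finset.sum_congr rfl fun i hi => Real.rpow_rpow_inv (hb i hi) h1'.ne'

lemma pow_entry_holder {P A B : Matrix n n ℝ} (hP : ∀ i j, 0 ≤ P i j) (hA : ∀ i j, 0 ≤ A i j)
    (hB : ∀ i j, 0 ≤ B i j) {t : ℝ} (h0 : 0 < t) (h1 : t < 1)
    (h : ∀ i j, P i j ≤ A i j ^ t * B i j ^ (1 - t)) (k : ℕ) :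
    ∀ i j, (P ^ k) i j ≤ (A ^ k) i j ^ t * (B ^ k) i j ^ (1 - t) := by
  induction k with
  | zero =>
    intro i j
    simp only [pow_zero, Matrix.one_apply]
    split_ifs
    · simp
    · rw [Real.zero_rpow h0.ne']; simp
  | succ k ih =>
    intro i j
    simp only [pow_succ', Matrix.mul_apply]
    refine le_trans (Finset.sum_le_sum fun l _ => ?_) (holder_sum Finset.univ
      (fun l => A i l * (A ^ k) l j) (fun l => B i l * (B ^ k) l j)
      (fun l _ => mul_nonneg (hA _ _) (pow_entry_nonneg hA k _ _))
      (fun l _ => mul_nonneg (hB _ _) (pow_entry_nonneg hB k _ _)) h0 h1)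
    rw [Real.mul_rpow (hA _ _) (pow_entry_nonneg hA k _ _),
      Real.mul_rpow (hB _ _) (pow_entry_nonneg hB k _ _), mul_mul_mul_comm]
    exact mul_le_mul (h i l) (ih l j) (pow_entry_nonneg hP k _ _)
      (mul_nonneg (Real.rpow_nonneg (hA _ _) _) (Real.rpow_nonneg (hB _ _) _))

lemma powNorm_holder {P A B : Matrix n n ℝ} (hP : ∀ i j, 0 ≤ P i j) (hA : ∀ i j, 0 ≤ A i j)
    (hB : ∀ i j, 0 ≤ B i j) {t : ℝ} (h0 : 0 < t) (h1 : t < 1)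
    (h : ∀ i j, P i j ≤ A i j ^ t * B i j ^ (1 - t)) (k : ℕ) :
    powNorm P k ≤ powNorm A k ^ t * powNorm B k ^ (1 - t) := by
  unfold powNorm
  simp only [abs_of_nonneg (pow_entry_nonneg hP k _ _), abs_of_nonneg (pow_entry_nonneg hA k _ _),
    abs_of_nonneg (pow_entry_nonneg hB k _ _)]
  refine le_trans (Finset.sum_le_sum fun i _ => ?_) (holder_sum Finset.univ
      (fun i => ∑ j, (A ^ k) i j) (fun i => ∑ j, (B ^ k) i j)
      (fun l _ => Finset.sum_nonneg fun j _ => pow_entry_nonneg hA k _ _)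
      (fun l _ => Finset.sum_nonneg fun j _ => pow_entry_nonneg hB k _ _) h0 h1)
  exact le_trans (Finset.sum_le_sum fun j _ => pow_entry_holder hP hA hB h0 h1 h k i j)
    (holder_sum Finset.univ _ _ (fun j _ => pow_entry_nonneg hA k _ _)
      (fun j _ => pow_entry_nonneg hB k _ _) h0 h1)

lemma specRad_holder {P A B : Matrix n n ℝ} (hP : ∀ i j, 0 ≤ P i j) (hA : ∀ i j, 0 ≤ A i j)
    (hB : ∀ i j, 0 ≤ B i j) {t : ℝ} (h0 : 0 < t) (h1 : t < 1)
    (h : ∀ i j, P i j ≤ A i j ^ t * B i j ^ (1 - t)) :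
    specRad P ≤ specRad A ^ t * specRad B ^ (1 - t) := by
  have h1' : 0 < 1 - t := by linarith
  have key : ∀ ε : ℝ, 0 < ε → specRad P ≤ (specRad A + ε) ^ t * (specRad B + ε) ^ (1 - t) := by
    intro ε hε
    have eA := Filter.eventually_lt_of_limsup_lt (f := atTop)
      (u := fun k : ℕ => powNorm A k ^ ((1 : ℝ) / (k : ℝ))) (b := specRad A + ε)
      (by rw [← specRad_eq]; linarith) (root_bddAbove A)
    have eB := Filter.eventually_lt_of_limsup_lt (f := atTop)
      (u := fun k : ℕ => powNorm B k ^ ((1 : ℝ) / (k : ℝ))) (b := specRad B + ε)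
      (by rw [← specRad_eq]; linarith) (root_bddAbove B)
    rw [specRad_eq P]
    refine Filter.limsup_le_of_le (root_bddBelow P).isCoboundedUnder_le ?_
    filter_upwards [eA, eB] with k hkA hkB
    have pA := powNorm_nonneg A k
    have pB := powNorm_nonneg B k
    calc powNorm P k ^ ((1 : ℝ) / (k : ℝ))
        ≤ (powNorm A k ^ t * powNorm B k ^ (1 - t)) ^ ((1 : ℝ) / (k : ℝ)) :=
          Real.rpow_le_rpow (powNorm_nonneg _ _) (powNorm_holder hP hA hB h0 h1 h k)
            (by positivity)
      _ = (powNorm A k ^ ((1 : ℝ) / (k : ℝ))) ^ t *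
            (powNorm B k ^ ((1 : ℝ) / (k : ℝ))) ^ (1 - t) := by
          rw [Real.mul_rpow (Real.rpow_nonneg pA _) (Real.rpow_nonneg pB _),
            ← Real.rpow_mul pA, ← Real.rpow_mul pB, ← Real.rpow_mul pA, ← Real.rpow_mul pB,
            mul_comm t, mul_comm (1 - t)]
      _ ≤ _ := mul_le_mul
          (Real.rpow_le_rpow (Real.rpow_nonneg pA _) hkA.le h0.le)
          (Real.rpow_le_rpow (Real.rpow_nonneg pB _) hkB.le h1'.le)
          (Real.rpow_nonneg (Real.rpow_nonneg pB _) _)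
          (Real.rpow_nonneg (by have := specRad_nonneg A; linarith) _)
  have hcont : Continuous (fun ε : ℝ => (specRad A + ε) ^ t * (specRad B + ε) ^ (1 - t)) :=
    ((continuous_const.add continuous_id).rpow_const fun _ => Or.inr h0.le).mul
      ((continuous_const.add continuous_id).rpow_const fun _ => Or.inr h1'.le)
  have hlim := (hcont.tendsto 0).mono_left (nhdsWithin_le_nhds (s := Set.Ioi 0))
  simp only [add_zero] at hlim
  refine ge_of_tendsto hlim ?_
  filter_upwards [self_mem_nhdsWithin] with ε hε using key ε hε

end Helpers

lemma loop_succ {V E : Type*} {src rng : E → V} {μ : List E} (h : IsLoop src rng μ) :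
    ∀ e ∈ μ, ∃ f ∈ μ, rng e = src f := by
  obtain ⟨hne, hch, hcl⟩ := h
  intro e he
  obtain ⟨i, hi, rfl⟩ := List.getElem_of_mem he
  by_cases hi' : i + 1 < μ.length
  · exact ⟨μ[i + 1], List.getElem_mem _, List.isChain_iff_getElem.1 hch i hi'⟩
  · refine ⟨μ.head hne, List.head_mem _, ?_⟩
    rw [hcl, List.getLast_eq_getElem]
    congr 2
    omega

lemma Amat_nonneg {V E : Type*} [DecidableEq V] [Fintype E] (src rng : E → V) (F : E → ℝ)
    (β : ℝ) (v w : V) : 0 ≤ Amat src rng F β v w :=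
  Finset.sum_nonneg fun _ _ => (Real.exp_pos _).le

lemma Amat_holder {V E : Type*} [DecidableEq V] [Fintype E] (src rng : E → V) (F : E → ℝ)
    (β β' : ℝ) {t : ℝ} (h0 : 0 < t) (h1 : t < 1) (v w : V) :
    Amat src rng F (t * β + (1 - t) * β') v w ≤
      Amat src rng F β v w ^ t * Amat src rng F β' v w ^ (1 - t) := by
  unfold Amat
  refine le_trans (le_of_eq ?_) (holder_sum _ (fun e => Real.exp (-β * F e))
    (fun e => Real.exp (-β' * F e)) (fun _ _ => (Real.exp_pos _).le)
    (fun _ _ => (Real.exp_pos _).le) h0 h1)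
  refine Finset.sum_congr rfl fun e _ => ?_
  rw [← Real.exp_mul, ← Real.exp_mul, ← Real.exp_add]
  congr 1
  ring

/-- For any component `C`, the function `β ↦ ρ(A(β)^C)` is strictly positive, continuous
and log-convex. -/
theorem specRad_component_logConvex {V E : Type*} [Fintype V] [DecidableEq V] [Fintype E]
    (src rng : E → V) (F : E → ℝ)
    (C : Set V) (hC : GIsComponent src rng C) :
    (∀ β : ℝ, 0 < specRadOn (Amat src rng F β) C) ∧
    Continuous (fun β : ℝ => specRadOn (Amat src rng F β) C) ∧
    (∀ β β' t : ℝ, 0 ≤ t → t ≤ 1 →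
      specRadOn (Amat src rng F (t * β + (1 - t) * β')) C ≤
        specRadOn (Amat src rng F β) C ^ t *
          specRadOn (Amat src rng F β') C ^ (1 - t)) := by
  have hpos : ∀ β : ℝ, 0 < specRadOn (Amat src rng F β) C := by
    intro β
    obtain ⟨-, μ, hμ, hμC⟩ := hC
    have hc : 0 < Real.exp (-(|β| * ∑ e, |F e|)) := Real.exp_pos _
    refine hc.trans_le ?_
    unfold specRadOn
    refine @le_specRad _ (_) (_) _ (fun i j => Amat_nonneg _ _ _ _ _ _) _ hc.le
      {v | ∃ e ∈ μ, src e = v.1} ?_ ?_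
    · obtain ⟨hne, -, -⟩ := hμ
      exact ⟨⟨src (μ.head hne), (hμC _ (List.head_mem hne)).1⟩, μ.head hne,
        List.head_mem hne, rfl⟩
    · rintro ⟨v, hv⟩ ⟨e, he, hev⟩
      obtain ⟨f, hf, hef⟩ := loop_succ hμ e he
      refine ⟨⟨rng e, (hμC e he).2⟩, ⟨f, hf, hef.symm⟩, ?_⟩
      have h1 : Real.exp (-β * F e) ≤ Amat src rng F β v (rng e) := by
        unfold Amat
        exact Finset.single_le_sum (f := fun e => Real.exp (-β * F e))
          (fun _ _ => (Real.exp_pos _).le)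
          (Finset.mem_filter.2 ⟨Finset.mem_univ e, hev, rfl⟩)
      refine le_trans (Real.exp_le_exp.2 ?_) h1
      have h2 : |F e| ≤ ∑ e, |F e| :=
        Finset.single_le_sum (f := fun e => |F e|) (fun _ _ => abs_nonneg _) (Finset.mem_univ e)
      have h3 : β * F e ≤ |β| * |F e| := by rw [← abs_mul]; exact le_abs_self _
      have h4 := mul_le_mul_of_nonneg_left h2 (abs_nonneg β)
      linarith
  have hlog : ∀ β β' t : ℝ, 0 ≤ t → t ≤ 1 →
      specRadOn (Amat src rng F (t * β + (1 - t) * β')) C ≤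
        specRadOn (Amat src rng F β) C ^ t *
          specRadOn (Amat src rng F β') C ^ (1 - t) := by
    intro β β' t h0 h1
    rcases h0.eq_or_lt with rfl | h0
    · simp
    rcases h1.eq_or_lt with rfl | h1
    · simp
    unfold specRadOn
    exact @specRad_holder _ (_) (_) _ _ _ (fun i j => Amat_nonneg _ _ _ _ _ _)
      (fun i j => Amat_nonneg _ _ _ _ _ _) (fun i j => Amat_nonneg _ _ _ _ _ _) _ h0 h1
      (fun i j => Amat_holder _ _ _ _ _ h0 h1 _ _)
  refine ⟨hpos, ?_, hlog⟩
  have hconv : ConvexOn ℝ Set.univ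
      (fun β : ℝ => Real.log (specRadOn (Amat src rng F β) C)) := by
    refine ⟨convex_univ, ?_⟩
    intro x _ y _ a b ha hb hab
    obtain rfl : b = 1 - a := by linarith
    simp only [smul_eq_mul]
    rw [← Real.log_rpow (hpos x), ← Real.log_rpow (hpos y),
      ← Real.log_mul (Real.rpow_pos_of_pos (hpos x) _).ne' (Real.rpow_pos_of_pos (hpos y) _).ne']
    exact Real.log_le_log (hpos _) (hlog x y a ha (by linarith))
  have hcont := continuousOn_univ.1 (hconv.continuousOn isOpen_univ)
  have := Real.continuous_exp.comp hcont
  refine this.congr fun β => ?_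
  exact Real.exp_log (hpos β)
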